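/- Let Sig be the first-order relational signature with binary relation symbols ⊑, S, Suc*, E and a unary relation symbol C, and let 𝔖 be the Sig-structure with domain List ℕ in which ⊑ is interpreted as the prefix relation on lists, S(u, v) holds iff v = u ++ [m] for some m ∈ ℕ, Suc*(u, v) holds iff there exist z ∈ List ℕ and m ∈ ℕ with u = z ++ [m] and v = z ++ [m + 1], C(v) holds iff v = u ++ [m, m] for some u ∈ List ℕ and m ∈ ℕ, and E(u, v) holds iff u and v have equal length. (This structure is the strong tree iteration of (ℕ, Suc) expanded by the equal-level relation; quantification over siblings of a node is expressible in plain first-order logic here since S belongs to the signature.) Then the first-order theory of 𝔖 is undecidable: under a standard computable Gödel encoding of first-order Sig-sentences as natural numbers, the set of codes of sentences true in 𝔖 is not a computable set. -/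

import Mathlib

/-!
The halting problem is reduced to the theory of the tree. A natural number is represented by the
length of a list, so that equality of numbers is the relation `E`, and order and successor come
from `⊑` and `S`. The clone predicate together with `Suc*` expresses that a node is extended by a
letter one less than its last letter (`Dec`); hence the node obtained from a nonempty `x` by
counting its last letter `m` down to `0` is definable (`countDown_iff`), and it has length
`x.length + m`. Applied to constant lists this defines addition of lengths (`DP.add`), and
therefore the relation "the letter of `q` at position `i` is `m`" (`DP.get`).

Since lists can be quantified, finite sequences of numbers are available, so definable relations
are closed under iteration (`DP.iter`). Multiplication and the pairing function follow, and by
induction on `Nat.Partrec` the graph of every partial recursive function is definable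
(`graphDef_of_partrec`). In particular some formula `φ` defines the lists whose length is the index
of a program halting on input `0`.

The sentence `redSentence φ n` states that no list of length `n` satisfies `φ`, where "length `n`"
is spelled out by `n` nested quantifiers over parents. Its code is a primitive recursive function
of `n`: the codes of its symbols are a fixed list followed by blocks depending only on the
quantifier depth (`godel_redSentence`). A decision procedure for the theory would thus decide the
halting problem.
-/

open FirstOrder

/-- The relation symbols of the signature: prefix `⊑`, tree successor `S`,
alphabet successor `Suc*`, equal level `E` (all binary), and clone `C` (unary). -/
inductive SigRel : ℕ → Type
  | prefix : SigRel 2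
  | treeSucc : SigRel 2
  | sucStar : SigRel 2
  | eqLevel : SigRel 2
  | clone : SigRel 1

/-- The first-order signature with relation symbols `⊑`, `S`, `Suc*`, `E`, `C`
and no function symbols. -/
@[reducible] def Sig : Language := ⟨fun _ => Empty, SigRel⟩

/-- The strong tree iteration of `(ℕ, Suc)` with the equal-level relation, as a
`Sig`-structure on `List ℕ`. -/
instance treeStruct : Sig.Structure (List ℕ) where
  funMap := fun f _ => f.elim
  RelMap := fun {n} r v =>
    match r with
    | .prefix => v 0 <+: v 1
    | .treeSucc => ∃ m : ℕ, v 1 = v 0 ++ [m]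
    | .sucStar => ∃ (z : List ℕ) (m : ℕ), v 0 = z ++ [m] ∧ v 1 = z ++ [m + 1]
    | .eqLevel => (v 0).length = (v 1).length
    | .clone => ∃ (u : List ℕ) (m : ℕ), v 0 = u ++ [m, m]

instance : Encodable (Σ n, SigRel n) :=
  Encodable.ofLeftInjection
    (fun r =>
      match r with
      | ⟨2, .prefix⟩ => (0 : Fin 5)
      | ⟨2, .treeSucc⟩ => 1
      | ⟨2, .sucStar⟩ => 2
      | ⟨2, .eqLevel⟩ => 3
      | ⟨1, .clone⟩ => 4)
    (fun i =>
      match i with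
      | 0 => some ⟨2, .prefix⟩
      | 1 => some ⟨2, .treeSucc⟩
      | 2 => some ⟨2, .sucStar⟩
      | 3 => some ⟨2, .eqLevel⟩
      | 4 => some ⟨1, .clone⟩)
    (by rintro ⟨n, r⟩; cases r <;> rfl)

instance : IsEmpty (Σ n, Sig.Functions n) := ⟨fun ⟨_, f⟩ => f.elim⟩

/-- A standard computable Gödel encoding of `Sig`-sentences as natural numbers,
obtained from Mathlib's list encoding of bounded formulas. -/
def godel (φ : Sig.Sentence) : ℕ :=
  Encodable.encode (Language.BoundedFormula.listEncode φ)

theorem godel_injective : Function.Injective godel := by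
  intro φ ψ h
  have h' := Encodable.encode_injective h
  have h2 := Language.BoundedFormula.listEncode_sigma_injective
    (a₁ := (⟨0, φ⟩ : Σ n, Sig.BoundedFormula Empty n)) (a₂ := ⟨0, ψ⟩) h'
  exact eq_of_heq (Sigma.ext_iff.mp h2).2

/-! ### Definable relations on `List ℕ` -/

/-- A property of valuations `α → List ℕ` is definable if it is expressed by a first-order
formula whose free variables are indexed by `α`. The context `α` is kept arbitrary, so that
quantifiers extend it to `Option α` and no renaming of variables is needed. -/
def DP {α : Type} (P : (α → List ℕ) → Prop) : Prop :=
  ∃ φ : Sig.Formula α, ∀ v : α → List ℕ, φ.Realize v ↔ P v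

/-- The interpretation of `S`. -/
def SucT (u v : List ℕ) : Prop := ∃ m : ℕ, v = u ++ [m]

/-- The interpretation of `Suc*`. -/
def SucS (u v : List ℕ) : Prop := ∃ (z : List ℕ) (m : ℕ), u = z ++ [m] ∧ v = z ++ [m + 1]

/-- The interpretation of `C`. -/
def Clone (v : List ℕ) : Prop := ∃ (u : List ℕ) (m : ℕ), v = u ++ [m, m]

namespace DP

variable {α : Type}

theorem of_iff {P Q : (α → List ℕ) → Prop} (h : DP P) (e : ∀ v, Q v ↔ P v) : DP Q := by
  obtain ⟨φ, hφ⟩ := h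
  exact ⟨φ, fun v => (hφ v).trans (e v).symm⟩

theorem pre (i j : α) : DP (fun v : α → List ℕ => v i <+: v j) :=
  ⟨Language.Relations.formula₂ (L := Sig) SigRel.prefix (.var i) (.var j), fun _ =>
    Language.Formula.realize_rel₂⟩

theorem sucT (i j : α) : DP (fun v : α → List ℕ => SucT (v i) (v j)) :=
  ⟨Language.Relations.formula₂ (L := Sig) SigRel.treeSucc (.var i) (.var j), fun _ =>
    Language.Formula.realize_rel₂⟩

theorem sucS (i j : α) : DP (fun v : α → List ℕ => SucS (v i) (v j)) :=
  ⟨Language.Relations.formula₂ (L := Sig) SigRel.sucStar (.var i) (.var j), fun _ =>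
    Language.Formula.realize_rel₂⟩

theorem eqN (i j : α) : DP (fun v : α → List ℕ => (v i).length = (v j).length) :=
  ⟨Language.Relations.formula₂ (L := Sig) SigRel.eqLevel (.var i) (.var j), fun _ =>
    Language.Formula.realize_rel₂⟩

theorem clone (i : α) : DP (fun v : α → List ℕ => Clone (v i)) :=
  ⟨Language.Relations.formula₁ (L := Sig) SigRel.clone (.var i), fun _ =>
    Language.Formula.realize_rel₁⟩

theorem not {P : (α → List ℕ) → Prop} (h : DP P) : DP (fun v => ¬ P v) := by
  obtain ⟨φ, hφ⟩ := h
  exact ⟨φ.not, fun v => by simp [Language.Formula.realize_not, hφ]⟩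

theorem imp {P Q : (α → List ℕ) → Prop} (h : DP P) (k : DP Q) : DP (fun v => P v → Q v) := by
  obtain ⟨φ, hφ⟩ := h
  obtain ⟨ψ, hψ⟩ := k
  exact ⟨φ.imp ψ, fun v => by simp [Language.Formula.realize_imp, hφ, hψ]⟩

theorem and {P Q : (α → List ℕ) → Prop} (h : DP P) (k : DP Q) : DP (fun v => P v ∧ Q v) :=
  (h.imp k.not).not.of_iff fun v => by tauto

theorem or {P Q : (α → List ℕ) → Prop} (h : DP P) (k : DP Q) : DP (fun v => P v ∨ Q v) :=
  (h.not.imp k).of_iff fun v => by tauto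

theorem all {P : (α → List ℕ) → List ℕ → Prop}
    (h : DP (fun w : Option α → List ℕ => P (fun i => w (some i)) (w none))) :
    DP (fun v => ∀ x : List ℕ, P v x) := by
  obtain ⟨φ, hφ⟩ := h
  refine ⟨(φ.relabel (fun o => Option.elim o (Sum.inr ()) Sum.inl) :
    Sig.Formula (α ⊕ Unit)).iAlls Unit, fun v => ?_⟩
  simp only [Language.Formula.realize_iAlls, Language.Formula.realize_relabel, hφ]
  exact ⟨fun h x => h (fun _ => x), fun h i => h (i ())⟩

theorem ex {P : (α → List ℕ) → List ℕ → Prop}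
    (h : DP (fun w : Option α → List ℕ => P (fun i => w (some i)) (w none))) :
    DP (fun v => ∃ x : List ℕ, P v x) :=
  (all (P := fun v x => ¬ P v x) h.not).not.of_iff fun v => by simp

/-- Quantification over numbers: a number is represented by any list of that length. -/
theorem allN {P : (α → List ℕ) → ℕ → Prop}
    (h : DP (fun w : Option α → List ℕ => P (fun i => w (some i)) (w none).length)) :
    DP (fun v => ∀ n : ℕ, P v n) :=
  (all (P := fun v x => P v x.length) h).of_iff fun v =>
    ⟨fun h x => h _, fun h n => by simpa using h (List.replicate n 0)⟩

theorem exN {P : (α → List ℕ) → ℕ → Prop}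
    (h : DP (fun w : Option α → List ℕ => P (fun i => w (some i)) (w none).length)) :
    DP (fun v => ∃ n : ℕ, P v n) :=
  (allN (P := fun v x => ¬ P v x) h.not).not.of_iff fun v => by simp

/-! ### Lengths of lists as natural numbers -/

theorem le (i j : α) : DP (fun v : α → List ℕ => (v i).length ≤ (v j).length) := by
  have : DP (fun v : α → List ℕ => ∃ z : List ℕ, z <+: v j ∧ z.length = (v i).length) := by
    apply_rules [pre, eqN, and, ex]
  refine this.of_iff fun v =>
    ⟨fun h => ⟨(v j).take (v i).length, List.take_prefix _ _, by simpa⟩, ?_⟩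
  rintro ⟨z, hz, h⟩
  exact h ▸ hz.length_le

theorem lt (i j : α) : DP (fun v : α → List ℕ => (v i).length < (v j).length) :=
  (le j i).not.of_iff fun v => by simp

theorem succ (i j : α) : DP (fun v : α → List ℕ => (v j).length = (v i).length + 1) := by
  have : DP (fun v : α → List ℕ => ∃ z : List ℕ, SucT (v i) z ∧ (v j).length = z.length) := by
    apply_rules [sucT, eqN, and, ex]
  refine this.of_iff fun v => ⟨fun h => ⟨v i ++ [0], ⟨0, rfl⟩, by simpa⟩, ?_⟩
  rintro ⟨z, ⟨m, rfl⟩, h⟩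
  simpa using h

theorem zero (i : α) : DP (fun v : α → List ℕ => (v i).length = 0) := by
  have : DP (fun v : α → List ℕ => ∀ z : List ℕ, ¬ SucT z (v i)) := by
    apply_rules [sucT, not, all]
  refine this.of_iff fun v => ⟨?_, fun h => ?_⟩
  · rintro h z ⟨m, hm⟩
    simp [hm] at h
  · rcases List.eq_nil_or_concat (v i) with e | ⟨z, m, e⟩
    · simp [e]
    · exact absurd ⟨m, by simpa using e⟩ (h z)

theorem one (i : α) : DP (fun v : α → List ℕ => (v i).length = 1) := by
  have : DP (fun v : α → List ℕ => ∃ n : ℕ, n = 0 ∧ (v i).length = n + 1) := by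
    apply_rules [zero, succ, and, exN]
  exact this.of_iff fun v => by simp

end DP

/-! ### Reading letters by counting down -/

/-- `w'` is the child of `w` whose last letter is one less than the last letter of `w`. -/
def Dec (w w' : List ℕ) : Prop := ∃ c : List ℕ, SucT w c ∧ Clone c ∧ SucS w' c

theorem dec_iff {z w' : List ℕ} {m : ℕ} :
    Dec (z ++ [m]) w' ↔ ∃ k, m = k + 1 ∧ w' = z ++ [m] ++ [k] := by
  constructor
  · rintro ⟨c, ⟨a, rfl⟩, ⟨u, b, h⟩, ⟨t, k, rfl, h'⟩⟩
    have h1 : z ++ [m] ++ [a] = (u ++ [b]) ++ [b] := by simpa using h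
    obtain ⟨h2, rfl⟩ := List.append_singleton_inj.1 h1
    obtain ⟨rfl, rfl⟩ := List.append_singleton_inj.1 h2
    obtain ⟨rfl, rfl⟩ := List.append_singleton_inj.1 h'
    exact ⟨k, rfl, rfl⟩
  · rintro ⟨k, rfl, rfl⟩
    exact ⟨z ++ [k + 1] ++ [k + 1], ⟨_, rfl⟩, ⟨z, k + 1, by simp⟩, ⟨z ++ [k + 1], k, rfl, rfl⟩⟩

/-- `y` extends `x` by letters that count down to zero from the last letter of `x`
(meaningful for nonempty `x`): every step beyond `x` is a `Dec` step, and the last letter of `y`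
has no predecessor. -/
def CountDown (x y : List ℕ) : Prop :=
  x <+: y ∧ (∀ w w' : List ℕ, x <+: w → SucT w w' → w' <+: y → Dec w w') ∧
    ∀ t : List ℕ, ¬ SucS t y

theorem countDown_iff {m : ℕ} {z y : List ℕ} :
    CountDown (z ++ [m]) y ↔ y = z ++ [m] ++ (List.range m).reverse := by
  constructor
  · rintro ⟨⟨t, rfl⟩, h, h0⟩
    induction m generalizing z t with
    | zero =>
      cases t with
      | nil => simp
      | cons a t =>
        obtain ⟨k, hk, -⟩ := dec_iff.1 (h (z ++ [0]) (z ++ [0] ++ [a]) List.prefix_rfl ⟨a, rfl⟩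
          ⟨t, by simp⟩)
        omega
    | succ m ih =>
      cases t with
      | nil => exact absurd ⟨z, m, rfl, by simp⟩ (h0 (z ++ [m]))
      | cons a t =>
        obtain ⟨k, hk, e⟩ := dec_iff.1 (h (z ++ [m + 1]) (z ++ [m + 1] ++ [a]) List.prefix_rfl
          ⟨a, rfl⟩ ⟨t, by simp⟩)
        obtain ⟨-, rfl⟩ := List.append_singleton_inj.1 e
        obtain rfl : m = a := by omega
        have e' : z ++ [m + 1] ++ m :: t = (z ++ [m + 1]) ++ [m] ++ t := by simp
        rw [e'] at h h0 ⊢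
        rw [ih t (fun w w' hw => h w w' ((List.prefix_append _ _).trans hw)) h0]
        simp [List.range_succ]
  · rintro rfl
    refine ⟨List.prefix_append _ _, ?_, ?_⟩
    · induction m generalizing z with
      | zero =>
        rintro w w' hw ⟨a, rfl⟩ hw'
        have h1 := hw.length_le
        have h2 := hw'.length_le
        simp at h1 h2
        omega
      | succ m ih =>
        have e : z ++ [m + 1] ++ (List.range (m + 1)).reverse
            = (z ++ [m + 1]) ++ [m] ++ (List.range m).reverse := by simp [List.range_succ]
        rw [e]
        rintro w w' ⟨t, rfl⟩ ⟨a, rfl⟩ hw'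
        cases t with
        | nil =>
          have h3 : a = m := by
            simpa [List.append_assoc] using hw'
          subst h3
          rw [List.append_nil]
          exact dec_iff.2 ⟨a, rfl, rfl⟩
        | cons b t =>
          have h3 : b = m := by
            have h4 : (z ++ [m + 1] ++ [b]) <+: z ++ [m + 1] ++ [m] ++ (List.range m).reverse :=
              List.IsPrefix.trans ⟨t ++ [a], by simp⟩ hw'
            simpa [List.append_assoc] using h4
          subst h3
          exact ih _ _ ⟨t, by simp⟩ ⟨a, rfl⟩ hw'
    · rintro t ⟨u, k, rfl, h⟩
      cases m with
      | zero => simp at h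
      | succ m =>
        -- the last letter of the right-hand side is a successor, that of the left is `0`
        have := congrArg List.getLast? h
        rw [List.range_succ_eq_map, List.reverse_cons, ← List.append_assoc,
          List.getLast?_concat, List.getLast?_concat] at this
        simp at this

theorem countDown_length {x y : List ℕ} {m : ℕ} {z : List ℕ} (hx : x = z ++ [m])
    (h : CountDown x y) : y.length = x.length + m := by
  subst hx
  simp [countDown_iff.1 h]
  omega

/-- All letters of `c` are equal. -/
def Const (c : List ℕ) : Prop :=
  ∀ w w' : List ℕ, SucT w w' → w' <+: c → ¬ w.length = 0 → Clone w'

theorem const_iff {k : ℕ} {t : List ℕ} :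
    Const (k :: t) ↔ t = List.replicate t.length k := by
  constructor
  · intro h
    induction t using List.reverseRecOn with
    | nil => rfl
    | append_singleton t a ih =>
      have e := ih fun w w' hw hw' => h w w' hw (hw'.trans ⟨[a], by simp⟩)
      obtain ⟨u, m, hu⟩ := h (k :: t) (k :: (t ++ [a])) ⟨a, by simp⟩ List.prefix_rfl (by simp)
      have h1 : k :: t ++ [a] = u ++ [m] ++ [m] := by simpa using hu
      obtain ⟨h2, rfl⟩ := List.append_singleton_inj.1 h1
      have h3 : a ∈ k :: t := by simp [h2]
      rw [e] at h3
      obtain rfl : a = k := by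
        simp only [List.mem_cons, List.mem_replicate] at h3
        tauto
      rw [List.length_append, List.length_singleton, List.replicate_succ', ← e]
  · rintro h w w' ⟨a, rfl⟩ hw' hw
    rw [h, ← List.replicate_succ] at hw'
    obtain ⟨n, e⟩ : ∃ n, w ++ [a] = List.replicate n k :=
      ⟨_, List.eq_replicate_of_mem fun b hb => List.eq_of_mem_replicate (hw'.subset hb)⟩
    rcases List.eq_nil_or_concat w with rfl | ⟨u, b, rfl⟩
    · simp at hw
    · have h0 : ∀ x ∈ u.concat b ++ [a], x = k := fun x hx => by
        rw [e] at hx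
        exact List.eq_of_mem_replicate hx
      have h1 : b = k := h0 b (by simp)
      have h2 : a = k := h0 a (by simp)
      exact ⟨u, k, by simp [h1, h2]⟩

namespace DP

variable {α : Type}

theorem countDown (i j : α) : DP (fun v : α → List ℕ => CountDown (v i) (v j)) := by
  unfold CountDown Dec
  apply_rules [pre, sucT, sucS, clone, not, and, imp, all, ex]

theorem const (i : α) : DP (fun v : α → List ℕ => Const (v i)) := by
  unfold Const
  apply_rules [pre, sucT, zero, clone, not, imp, all]

/-- Addition with nonzero first summand is definable: counting down from the constant list of
length `l` with letters `m` produces a list of length `l + m`, and the letter `m` is identified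
by the countdown from the one-letter list `[m]`, which has length `m + 1`. -/
theorem add_of_pos (i j k : α) : DP (fun v : α → List ℕ =>
    ¬ (v i).length = 0 ∧ (v k).length = (v i).length + (v j).length) := by
  have : DP (fun v : α → List ℕ => ∃ a c d e : List ℕ, a.length = 1 ∧ c.length = (v i).length ∧
      a <+: c ∧ Const c ∧ CountDown a e ∧ CountDown c d ∧ e.length = (v j).length + 1 ∧
      (v k).length = d.length) := by
    apply_rules [one, eqN, pre, const, countDown, succ, and, ex]
  refine this.of_iff fun v => ⟨?_, ?_⟩
  · rintro ⟨h0, h⟩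
    obtain ⟨n, hn⟩ := Nat.exists_eq_succ_of_ne_zero h0
    refine ⟨[(v j).length], List.replicate (v i).length (v j).length,
      List.replicate n (v j).length ++ [(v j).length] ++ (List.range (v j).length).reverse, _,
      rfl, by simp, ?_, ?_, (countDown_iff (z := [])).2 rfl, ?_, ?_, ?_⟩
    · rw [hn, List.replicate_succ]
      exact ⟨_, rfl⟩
    · rw [hn, List.replicate_succ, const_iff]
      simp
    · rw [hn, Nat.succ_eq_add_one, List.replicate_succ', countDown_iff]
    · simp
    · simp [h, hn]
      omega
  · rintro ⟨a, c, d, e, ha, hc, ⟨t, rfl⟩, hcc, he, hd, h1, h2⟩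
    obtain ⟨m, rfl⟩ := List.length_eq_one_iff.1 ha
    have h3 := countDown_length (z := []) rfl he
    have h4 : t = List.replicate t.length m := const_iff.1 hcc
    have h5 : [m] ++ t = List.replicate t.length m ++ [m] := by
      rw [← List.replicate_succ', List.replicate_succ, ← h4]
      rfl
    have h6 := countDown_length h5 hd
    simp at hc h3
    simp at h6
    omega

theorem add (i j k : α) : DP (fun v : α → List ℕ =>
    (v k).length = (v i).length + (v j).length) := by
  have : DP (fun v : α → List ℕ => ∃ a b : ℕ, a = (v i).length + 1 ∧ b = (v k).length + 1 ∧
      (¬ a = 0 ∧ b = a + (v j).length)) := by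
    apply_rules [add_of_pos, succ, and, exN]
  refine this.of_iff fun v => ?_
  constructor
  · intro h
    exact ⟨_, _, rfl, rfl, by omega, by omega⟩
  · rintro ⟨a, b, h1, h2, h3, h4⟩
    omega

/-- Access to the letters of a list: the countdown from a list of length `l` with last letter `m`
has length `l + m`. -/
theorem get (q i m : α) : DP (fun v : α → List ℕ =>
    (v q)[(v i).length]? = some (v m).length) := by
  have : DP (fun v : α → List ℕ => ∃ p d : List ℕ, p <+: v q ∧ p.length = (v i).length + 1 ∧
      CountDown p d ∧ d.length = p.length + (v m).length) := by
    apply_rules [pre, succ, countDown, add, and, ex]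
  refine this.of_iff fun v => ⟨fun h => ?_, ?_⟩
  · obtain ⟨hi, hm⟩ := List.getElem?_eq_some_iff.1 h
    refine ⟨(v q).take ((v i).length + 1),
      (v q).take (v i).length ++ [(v m).length] ++ (List.range (v m).length).reverse,
      List.take_prefix _ _, ?_, ?_, ?_⟩
    · rw [List.length_take]
      omega
    · rw [List.take_add_one, h, Option.toList_some, countDown_iff]
    · simp
      omega
  · rintro ⟨p, d, ⟨s, hs⟩, hp, hd, h⟩
    rcases List.eq_nil_or_concat p with rfl | ⟨z, m, rfl⟩
    · simp at hp
    · rw [List.concat_eq_append] at *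
      rw [countDown_length rfl hd] at h
      have h1 : z.length = (v i).length := by simpa using hp
      rw [← hs, ← h1]
      simp
      omega

end DP

/-! ### Definability of partial recursive functions -/

/-- `b` is reached after `n` steps of the relation `St` from an initial value satisfying `P0`;
the list `q` records all intermediate values. -/
def Iter (P0 : ℕ → Prop) (St : ℕ → ℕ → ℕ → Prop) (n b : ℕ) : Prop :=
  ∃ q : List ℕ, (∃ z x : ℕ, z = 0 ∧ q[z]? = some x ∧ P0 x) ∧
    (∀ i : ℕ, i < n → ∃ j x y : ℕ, j = i + 1 ∧ q[i]? = some x ∧ q[j]? = some y ∧ St i x y) ∧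
    q[n]? = some b

theorem iter_zero {P0 : ℕ → Prop} {St : ℕ → ℕ → ℕ → Prop} {b : ℕ} :
    Iter P0 St 0 b ↔ P0 b := by
  constructor
  · rintro ⟨q, ⟨_, x, rfl, hx, h⟩, -, hb⟩
    rw [hx] at hb
    exact Option.some.inj hb ▸ h
  · exact fun h => ⟨[b], ⟨0, b, rfl, rfl, h⟩, by simp, rfl⟩

theorem iter_succ {P0 : ℕ → Prop} {St : ℕ → ℕ → ℕ → Prop} {n b : ℕ} :
    Iter P0 St (n + 1) b ↔ ∃ x, Iter P0 St n x ∧ St n x b := by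
  constructor
  · rintro ⟨q, h0, hs, hb⟩
    obtain ⟨_, x, y, rfl, hx, hy, h⟩ := hs n (Nat.lt_succ_self n)
    rw [hy] at hb
    obtain rfl := Option.some.inj hb
    exact ⟨x, ⟨q, h0, fun i hi => hs i (by omega), hx⟩, h⟩
  · rintro ⟨x, ⟨q, ⟨_, x0, rfl, hx0, h0⟩, hs, hx⟩, h⟩
    have hl : (q.take (n + 1)).length = n + 1 := by
      have := (List.getElem?_eq_some_iff.1 hx).1
      rw [List.length_take]
      omega
    have e : ∀ i, i < n + 1 → (q.take (n + 1) ++ [b])[i]? = q[i]? := fun i hi => by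
      rw [List.getElem?_append_left (by omega), List.getElem?_take_of_lt hi]
    have eb : (q.take (n + 1) ++ [b])[n + 1]? = some b := by
      rw [List.getElem?_append_right (by omega), hl]
      simp
    refine ⟨q.take (n + 1) ++ [b], ⟨0, x0, rfl, by rw [e 0 (by omega), hx0], h0⟩, ?_, eb⟩
    intro i hi
    rcases Nat.lt_succ_iff_lt_or_eq.1 hi with hi' | rfl
    · obtain ⟨_, y, z, rfl, hy, hz, hh⟩ := hs i hi'
      exact ⟨i + 1, y, z, rfl, by rw [e i hi, hy], by rw [e (i + 1) (by omega), hz], hh⟩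
    · exact ⟨i + 1, x, b, rfl, by rw [e i hi, hx], eb, h⟩

namespace DP

variable {α : Type}

theorem iter {P0 : (α → List ℕ) → ℕ → Prop} {St : (α → List ℕ) → ℕ → ℕ → ℕ → Prop}
    (h0 : ∀ {β : Type} (g : α → β) (x : β),
      DP (fun w : β → List ℕ => P0 (fun a => w (g a)) (w x).length))
    (hs : ∀ {β : Type} (g : α → β) (i x y : β),
      DP (fun w : β → List ℕ => St (fun a => w (g a)) (w i).length (w x).length (w y).length))
    (n b : α) : DP (fun v : α → List ℕ => Iter (P0 v) (St v) (v n).length (v b).length) := by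
  unfold Iter
  refine ex (and (exN (exN (and ?_ (and ?_ ?_))))
    (and (allN (imp ?_ (exN (exN (exN (and ?_ (and ?_ (and ?_ ?_)))))))) ?_))
  · apply_rules [zero]
  · apply_rules [get]
  · exact h0 (fun a => some (some (some a))) _
  · apply_rules [lt]
  · apply_rules [succ]
  · apply_rules [get]
  · apply_rules [get]
  · exact hs (fun a => some (some (some (some (some a))))) _ _ _
  · apply_rules [get]

theorem mul (i j k : α) : DP (fun v : α → List ℕ =>
    (v k).length = (v i).length * (v j).length) := by
  have : DP (fun v : α → List ℕ => Iter (fun x => x = 0) (fun _ x y => y = x + (v j).length)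
      (v i).length (v k).length) :=
    iter (P0 := fun _ x => x = 0) (St := fun v _ x y => y = x + (v j).length)
      (fun _ x => zero x) (fun g _ x y => add x (g j) y) i k
  refine this.of_iff fun v => ?_
  generalize (v k).length = b
  induction (v i).length generalizing b with
  | zero => simp [iter_zero]
  | succ n ih => simp [iter_succ, ← ih, Nat.succ_mul]

theorem pair (i j k : α) : DP (fun v : α → List ℕ =>
    (v k).length = Nat.pair (v i).length (v j).length) := by
  have : DP (fun v : α → List ℕ =>
      ((v i).length < (v j).length ∧
        ∃ s : ℕ, s = (v j).length * (v j).length ∧ (v k).length = s + (v i).length) ∨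
      ((v j).length ≤ (v i).length ∧
        ∃ s t : ℕ, s = (v i).length * (v i).length ∧ t = s + (v i).length ∧
          (v k).length = t + (v j).length)) := by
    apply_rules [lt, le, mul, add, and, or, exN]
  refine this.of_iff fun v => ?_
  unfold Nat.pair
  split_ifs with h
  · simp [h, Nat.not_le.2 h]
  · simp [h, Nat.not_lt.1 h]

end DP

/-- The graph of a partial function on `ℕ` is definable, numbers being lengths of lists. -/
def GraphDef (f : ℕ →. ℕ) : Prop :=
  ∀ {α : Type} (i j : α), DP (fun v : α → List ℕ => (v j).length ∈ f (v i).length)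

theorem graphDef_of_partrec {f : ℕ →. ℕ} (hf : Nat.Partrec f) : GraphDef f := by
  induction hf with
  | zero => exact fun i j => (DP.zero j).of_iff fun v => by simp [pure, PFun.pure]
  | succ => exact fun i j => (DP.succ i j).of_iff fun v => by simp
  | left =>
    intro α i j
    have : DP (fun v : α → List ℕ => ∃ b : ℕ, (v i).length = Nat.pair (v j).length b) := by
      apply_rules [DP.pair, DP.exN]
    refine this.of_iff fun v => ⟨fun h => ⟨(v i).length.unpair.2, ?_⟩, ?_⟩
    · rw [(by simpa using h : (v j).length = (v i).length.unpair.1), Nat.pair_unpair]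
    · rintro ⟨b, hb⟩
      simp [hb]
  | right =>
    intro α i j
    have : DP (fun v : α → List ℕ => ∃ b : ℕ, (v i).length = Nat.pair b (v j).length) := by
      apply_rules [DP.pair, DP.exN]
    refine this.of_iff fun v => ⟨fun h => ⟨(v i).length.unpair.1, ?_⟩, ?_⟩
    · rw [(by simpa using h : (v j).length = (v i).length.unpair.2), Nat.pair_unpair]
    · rintro ⟨b, hb⟩
      simp [hb]
  | @pair f g _ _ hf hg =>
    intro α i j
    have : DP (fun v : α → List ℕ => ∃ a b : ℕ, a ∈ f (v i).length ∧ b ∈ g (v i).length ∧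
        (v j).length = Nat.pair a b) :=
      DP.exN (DP.exN ((hf _ _).and ((hg _ _).and (DP.pair _ _ _))))
    refine this.of_iff fun v => ?_
    simp [Seq.seq, eq_comm]
  | @comp f g _ _ hf hg =>
    intro α i j
    have : DP (fun v : α → List ℕ => ∃ a : ℕ, a ∈ g (v i).length ∧ (v j).length ∈ f a) :=
      DP.exN ((hg _ _).and (hf _ _))
    exact this.of_iff fun v => Part.mem_bind_iff
  | @prec f g _ _ hf hg =>
    intro α i j
    have key : ∀ a n b : ℕ, b ∈ (n.rec (f a) fun y IH => do
        let i ← IH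
        g (Nat.pair a (Nat.pair y i)) : Part ℕ) ↔
        Iter (fun x => x ∈ f a) (fun y x z => ∃ s t : ℕ, s = Nat.pair y x ∧ t = Nat.pair a s ∧
          z ∈ g t) n b := by
      intro a n
      induction n with
      | zero => simp [iter_zero]
      | succ n ih =>
        intro b
        refine Part.mem_bind_iff.trans (Iff.trans ?_ iter_succ.symm)
        refine exists_congr fun x => and_congr (ih x) ?_
        simp
    have : DP (fun v : α → List ℕ => ∃ a n : ℕ, (v i).length = Nat.pair a n ∧
        Iter (fun x => x ∈ f a) (fun y x z => ∃ s t : ℕ, s = Nat.pair y x ∧ t = Nat.pair a s ∧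
          z ∈ g t) n (v j).length) := by
      refine DP.exN (DP.exN ((DP.pair _ _ _).and ?_))
      exact DP.iter (α := Option (Option α))
        (P0 := fun v x => x ∈ f (v (some none)).length)
        (St := fun v y x z => ∃ s t : ℕ, s = Nat.pair y x ∧
          t = Nat.pair (v (some none)).length s ∧ z ∈ g t)
        (fun g x => hf _ _)
        (fun g i x y => DP.exN (DP.exN ((DP.pair _ _ _).and ((DP.pair _ _ _).and (hg _ _)))))
        none (some (some j))
    refine this.of_iff fun v => ?_
    simp only [Nat.unpaired, key]
    constructor
    · intro h
      exact ⟨_, _, (Nat.pair_unpair _).symm, h⟩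
    · rintro ⟨a, n, e, h⟩
      simpa only [e, Nat.unpair_pair] using h
  | @rfind f _ hf =>
    intro α i j
    have : DP (fun v : α → List ℕ => (∃ s z : ℕ, s = Nat.pair (v i).length (v j).length ∧ z = 0 ∧
        z ∈ f s) ∧ ∀ m : ℕ, m < (v j).length → ∃ s z : ℕ, s = Nat.pair (v i).length m ∧ ¬ z = 0 ∧
        z ∈ f s) :=
      (DP.exN (DP.exN ((DP.pair _ _ _).and ((DP.zero _).and (hf _ _))))).and
        (DP.allN ((DP.lt _ _).imp
          (DP.exN (DP.exN ((DP.pair _ _ _).and ((DP.zero _).not.and (hf _ _)))))))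
    refine this.of_iff fun v => ?_
    refine Nat.mem_rfind.trans ?_
    simp [and_comm]

/-! ### The reduction and its computability -/

open Language

/-- The atomic formula stating that the last variable in scope is the parent of the one
before it. -/
def parentAtom (k : ℕ) : Sig.BoundedFormula Empty (k + 1 + 1) :=
  BoundedFormula.rel (L := Sig) SigRel.treeSucc
    ![.var (Sum.inr (Fin.last (k + 1))), .var (Sum.inr (Fin.last k).castSucc)]

/-- A formula stating that the length of its last variable is not `m`: every chain of `m` parents
starting there ends in a node that has a parent. -/
def lengthNe : (m k : ℕ) → Sig.BoundedFormula Empty (k + 1)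
  | 0, k => (((parentAtom k).imp .falsum).all).imp .falsum
  | m + 1, k => ((parentAtom k).imp (lengthNe m (k + 1))).all

theorem realize_parentAtom {k : ℕ} {v : Empty → List ℕ} {xs : Fin (k + 1) → List ℕ}
    {y : List ℕ} : (parentAtom k).Realize v (Fin.snoc xs y) ↔ SucT y (xs (Fin.last k)) := by
  have h1 : (Fin.snoc xs y : Fin (k + 2) → List ℕ) (Fin.last (k + 1)) = y := by simp
  have h2 : (Fin.snoc xs y : Fin (k + 2) → List ℕ) (Fin.last k).castSucc = xs (Fin.last k) := by
    simp only [Fin.snoc_castSucc]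
  change SucT ((Fin.snoc xs y : Fin (k + 2) → List ℕ) (Fin.last (k + 1)))
    ((Fin.snoc xs y : Fin (k + 2) → List ℕ) (Fin.last k).castSucc) ↔ _
  rw [h1, h2]

theorem realize_lengthNe {m k : ℕ} {v : Empty → List ℕ} {xs : Fin (k + 1) → List ℕ} :
    (lengthNe m k).Realize v xs ↔ (xs (Fin.last k)).length ≠ m := by
  induction m generalizing k with
  | zero =>
    have : (lengthNe 0 k).Realize v xs ↔
        ((∀ y : List ℕ, SucT y (xs (Fin.last k)) → False) → False) :=
      imp_congr (forall_congr' fun y => imp_congr realize_parentAtom Iff.rfl) Iff.rfl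
    rw [this]
    rcases List.eq_nil_or_concat (xs (Fin.last k)) with e | ⟨z, m, e⟩
    · simp [e, SucT]
    · simp only [e, List.concat_eq_append]
      exact ⟨fun _ => by simp, fun _ h => h z ⟨m, rfl⟩⟩
  | succ m ih =>
    have : (lengthNe (m + 1) k).Realize v xs ↔
        ∀ y : List ℕ, SucT y (xs (Fin.last k)) → y.length ≠ m :=
      forall_congr' fun y => imp_congr realize_parentAtom (by rw [ih]; simp)
    rw [this]
    rcases List.eq_nil_or_concat (xs (Fin.last k)) with e | ⟨z, a, e⟩
    · simp [e, SucT]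
    · simp only [e, List.concat_eq_append]
      constructor
      · intro h
        have := h z ⟨a, rfl⟩
        simpa using this
      · rintro h y ⟨b, hb⟩
        obtain ⟨rfl, -⟩ := List.append_singleton_inj.1 hb
        simpa using h

/-- The sentence stating that no list of length `n` satisfies `φ`. -/
def redSentence (φ : Sig.Formula Unit) (n : ℕ) : Sig.Sentence :=
  BoundedFormula.all (n := 0)
    (BoundedFormula.imp (BoundedFormula.relabel (n := 1) (fun _ => Sum.inr 0) φ) (lengthNe n 0))

theorem realize_redSentence {φ : Sig.Formula Unit} {n : ℕ} :
    (List ℕ) ⊨ redSentence φ n ↔ ∀ x : List ℕ, φ.Realize (fun _ => x) → x.length ≠ n := by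
  refine forall_congr' fun x => imp_congr ?_ ?_
  · rw [BoundedFormula.realize_relabel, Formula.Realize, iff_eq_eq]
    exact congr (congrArg _ (funext fun _ => rfl)) (Subsingleton.elim _ _)
  · exact realize_lengthNe

/-- The symbols occurring in the list encoding of formulas. -/
abbrev FormulaSymbol : Type := (Σ k, Sig.Term (Empty ⊕ Fin k)) ⊕ ((Σ n, Sig.Relations n) ⊕ ℕ)

/-- The code of a numeric symbol (connectives, quantifier, falsum, scope sizes). -/
def codeNum (n : ℕ) : ℕ := 2 * (2 * n + 1) + 1

/-- The code of the variable `i` in a scope of size `k`. -/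
def codeVar (k i : ℕ) : ℕ := 2 * Nat.pair k (Nat.succ (Nat.pair (2 * (2 * i + 1)) 0))

/-- The code of the relation symbol `S`. -/
def codeS : ℕ := Encodable.encode (Sum.inr (Sum.inl ⟨2, SigRel.treeSucc⟩) : FormulaSymbol)

theorem encode_list_map {β : Type} [Encodable β] (l : List β) :
    Encodable.encode l = Encodable.encode (l.map Encodable.encode) := by
  induction l with
  | nil => rfl
  | cons a l ih => simp [Encodable.encode_list_cons, ih]

/-- The codes of the symbols in the list encoding of a formula. -/
def codes {k : ℕ} (φ : Sig.BoundedFormula Empty k) : List ℕ :=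
  φ.listEncode.map Encodable.encode

theorem codes_falsum (k : ℕ) :
    codes (BoundedFormula.falsum : Sig.BoundedFormula Empty k) = [codeNum (k + 2)] := rfl

theorem codes_imp {k : ℕ} (φ ψ : Sig.BoundedFormula Empty k) :
    codes (φ.imp ψ) = codeNum 0 :: (codes φ ++ codes ψ) :=
  (List.map_append :)

theorem codes_all {k : ℕ} (φ : Sig.BoundedFormula Empty (k + 1)) :
    codes φ.all = codeNum 1 :: codes φ := rfl

/-- The codes of the symbols of `parentAtom k`. -/
def atomCodes (k : ℕ) : List ℕ :=
  [codeS, codeNum (k + 2), codeVar (k + 2) (k + 1), codeVar (k + 2) k]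

theorem codes_parentAtom (k : ℕ) : codes (parentAtom k) = atomCodes k := rfl

/-- The codes contributed by one unfolding of `lengthNe`. -/
def blockCodes (k : ℕ) : List ℕ := [codeNum 1, codeNum 0] ++ atomCodes k

/-- The codes of the innermost part of `lengthNe`. -/
def finalCodes (k : ℕ) : List ℕ :=
  [codeNum 0, codeNum 1, codeNum 0] ++ atomCodes k ++ [codeNum (k + 4), codeNum (k + 3)]

theorem codes_lengthNe (m k : ℕ) :
    codes (lengthNe m k) = (List.range' k m).flatMap blockCodes ++ finalCodes (k + m) := by
  induction m generalizing k with
  | zero => simp [lengthNe, codes_imp, codes_all, codes_falsum, codes_parentAtom, finalCodes]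
  | succ m ih =>
    simp [lengthNe, codes_imp, codes_all, codes_parentAtom, ih, blockCodes, List.range'_succ,
      Nat.add_assoc, Nat.add_comm 1 m]

/-- Only the number of blocks and the final part of the code depend on `n`. -/
theorem godel_redSentence (φ : Sig.Formula Unit) : ∃ l : List ℕ, ∀ n : ℕ,
    godel (redSentence φ n) =
      Encodable.encode (l ++ ((List.range n).flatMap blockCodes ++ finalCodes n)) := by
  refine ⟨[codeNum 1, codeNum 0] ++ codes (k := 1)
    (BoundedFormula.relabel (n := 1) (fun _ => Sum.inr 0) φ), fun n => ?_⟩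
  have h : codes (lengthNe n 0) = (List.range n).flatMap blockCodes ++ finalCodes n := by
    simpa only [Nat.zero_add, List.range_eq_range'] using codes_lengthNe n 0
  rw [godel, encode_list_map, ← h]
  refine congrArg Encodable.encode ((codes_all _).trans ?_)
  rw [codes_imp]
  rfl

theorem primrec_codeNum : Primrec codeNum :=
  Primrec.succ.comp (Primrec.nat_mul.comp (Primrec.const 2)
    (Primrec.succ.comp (Primrec.nat_mul.comp (Primrec.const 2) Primrec.id)))

theorem primrec_codeVar : Primrec₂ codeVar :=
  Primrec.nat_mul.comp (Primrec.const 2) (Primrec₂.natPair.comp Primrec.fst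
    (Primrec.succ.comp (Primrec₂.natPair.comp
      (Primrec.nat_mul.comp (Primrec.const 2)
        (Primrec.succ.comp (Primrec.nat_mul.comp (Primrec.const 2) Primrec.snd)))
      (Primrec.const 0))))

theorem primrec_add (c : ℕ) : Primrec fun k : ℕ => k + c :=
  Primrec.nat_add.comp Primrec.id (Primrec.const c)

theorem primrec_atomCodes : Primrec atomCodes :=
  Primrec.list_cons.comp (Primrec.const codeS) <|
  Primrec.list_cons.comp (primrec_codeNum.comp (primrec_add 2)) <|
  Primrec.list_cons.comp (primrec_codeVar.comp (primrec_add 2) (primrec_add 1)) <|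
  Primrec.list_cons.comp (primrec_codeVar.comp (primrec_add 2) Primrec.id) <|
  Primrec.const []

theorem primrec_blockCodes : Primrec blockCodes :=
  Primrec.list_append.comp (Primrec.const _) primrec_atomCodes

theorem primrec_finalCodes : Primrec finalCodes :=
  Primrec.list_append.comp (Primrec.list_append.comp (Primrec.const _) primrec_atomCodes) <|
  Primrec.list_cons.comp (primrec_codeNum.comp (primrec_add 4)) <|
  Primrec.list_cons.comp (primrec_codeNum.comp (primrec_add 3)) <|
  Primrec.const []

theorem computable_godel_redSentence (φ : Sig.Formula Unit) :
    Computable fun n : ℕ => godel (redSentence φ n) := by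
  obtain ⟨l, hl⟩ := godel_redSentence φ
  have h : Primrec fun n : ℕ =>
      Encodable.encode (l ++ ((List.range n).flatMap blockCodes ++ finalCodes n)) :=
    Primrec.encode.comp <| Primrec.list_append.comp (Primrec.const l) <|
      Primrec.list_append.comp
        (Primrec.list_flatMap Primrec.list_range (primrec_blockCodes.comp Primrec.snd).to₂)
        primrec_finalCodes
  exact (h.of_eq fun n => (hl n).symm).to_comp

/-- the first-order theory of the strong tree iteration of `(ℕ, Suc)`
with the equal-level relation is undecidable: no computable function decides, from
the Gödel code of a `Sig`-sentence, whether the sentence holds in the structure. -/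
theorem firstOrderTheory_strongTreeIteration_undecidable :
    ¬ ∃ f : ℕ → Bool, Computable f ∧
      ∀ φ : Sig.Sentence, (f (godel φ) = true ↔ (List ℕ) ⊨ φ) := by
  rintro ⟨f, hf, hspec⟩
  let h : ℕ →. ℕ := fun n => Nat.Partrec.Code.eval (Denumerable.ofNat Nat.Partrec.Code n) 0
  have hh : Nat.Partrec h := Partrec.nat_iff.1 <|
    Nat.Partrec.Code.eval_part.comp (Computable.ofNat Nat.Partrec.Code) (Computable.const 0)
  -- `φ` defines the set of lists whose length is the index of a program halting on input `0`
  obtain ⟨φ, hφ⟩ : DP (fun v : Unit → List ℕ => ∃ b : ℕ, b ∈ h (v ()).length) :=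
    DP.exN (graphDef_of_partrec hh _ _)
  have key : ∀ n : ℕ, f (godel (redSentence φ n)) = true ↔ ¬ (h n).Dom := by
    intro n
    rw [hspec, realize_redSentence]
    simp only [hφ, ← Part.dom_iff_mem]
    constructor
    · intro H hn
      exact H (List.replicate n 0) (by simpa using hn) (by simp)
    · rintro H x hx rfl
      exact H hx
  refine ComputablePred.halting_problem 0 (ComputablePred.computable_iff.2
    ⟨fun c => !f (godel (redSentence φ (Encodable.encode c))),
      Primrec.not.to_comp.comp (hf.comp ((computable_godel_redSentence φ).comp Computable.encode)),
      funext fun c => propext ?_⟩)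
  have := key (Encodable.encode c)
  simp only [h, Denumerable.ofNat_encode] at this
  rw [Bool.not_eq_true', ← Bool.not_eq_true, this, not_not]
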